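/- arXiv:2511.20932 — 2 statements merged into one kernel-verified Lean document; each statement's English description precedes it below -/
import Mathlib

section
/- For every n ≥ 1, the quantity S_n satisfies 0 < S_n < 1; equivalently, 0 < 1 − S_n < 1. -/
open Finset

/-- The row of an `n × n` Bingo board through index `i`. -/
def bingoRow (n : ℕ) (i : Fin n) : Finset (Fin n × Fin n) :=
  Finset.univ.filter (fun s => s.1 = i)

/-- The column of an `n × n` Bingo board through index `j`. -/
def bingoCol (n : ℕ) (j : Fin n) : Finset (Fin n × Fin n) :=
  Finset.univ.filter (fun s => s.2 = j)

/-- The main diagonal `{(i,i)}`. -/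
def bingoDiag (n : ℕ) : Finset (Fin n × Fin n) :=
  Finset.univ.filter (fun s => (s.2 : ℕ) = (s.1 : ℕ))

/-- The anti-diagonal `{(i, n-1-i)}`. -/
def bingoAntiDiag (n : ℕ) : Finset (Fin n × Fin n) :=
  Finset.univ.filter (fun s => (s.2 : ℕ) = n - 1 - (s.1 : ℕ))

/-- The set `𝓛` of winning lines: `n` rows, `n` columns and the two diagonals. -/
def bingoLines (n : ℕ) : Finset (Finset (Fin n × Fin n)) :=
  (Finset.univ.image (bingoRow n)) ∪ (Finset.univ.image (bingoCol n)) ∪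
    {bingoDiag n, bingoAntiDiag n}

/-- An `(n,m)`-Bingo card: an injective assignment of numbers such that column `j`
only uses numbers in `[m*j, m*(j+1))`. -/
def IsBingoCard (n m : ℕ) (c : Fin n × Fin n → Fin (m * n)) : Prop :=
  Function.Injective c ∧
    ∀ i j : Fin n, m * (j : ℕ) ≤ (c (i, j) : ℕ) ∧ (c (i, j) : ℕ) < m * ((j : ℕ) + 1)

/-- Bingo is achieved within the first `k` calls of `σ`: some winning line has all of its
numbers among `σ 0, …, σ (k-1)`. -/
def BingoWins (n m : ℕ) (c : Fin n × Fin n → Fin (m * n))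
    (σ : Equiv.Perm (Fin (m * n))) (k : ℕ) : Prop :=
  ∃ L ∈ bingoLines n, ∀ s ∈ L, ∃ t : Fin (m * n), (t : ℕ) < k ∧ σ t = c s

/-- `S_n = ∑_{∅ ≠ X ⊆ 𝓛} (-1)^{|X|+1} / (m(X)+1)`, where `m(X)` is the number of squares
covered by the union of the lines in `X`. -/
noncomputable def Sn (n : ℕ) : ℝ :=
  ∑ X ∈ (bingoLines n).powerset.filter (fun X => X.Nonempty),
    (-1 : ℝ) ^ (X.card + 1) / (((X.sup id).card : ℝ) + 1)

/-- Weight of a set of squares: the integral of `p^|T| (1-p)^(N-|T|)` over `[0,1]`. -/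
noncomputable def bw {α : Type*} [Fintype α] [DecidableEq α] (T : Finset α) : ℝ :=
  ∫ p in (0:ℝ)..1, p ^ T.card * (1 - p) ^ (Tᶜ).card

theorem bw_pos {α : Type*} [Fintype α] [DecidableEq α] (T : Finset α) : 0 < bw T := by
  unfold bw
  apply intervalIntegral.intervalIntegral_pos_of_pos_on
  · apply Continuous.intervalIntegrable
    fun_prop
  · intro x hx
    have h1 : 0 < x := hx.1
    have h2 : 0 < 1 - x := by linarith [hx.2]
    positivity
  · norm_num

theorem bw_point {α : Type*} [Fintype α] [DecidableEq α] (U : Finset α) (p : ℝ) :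
    ∑ T : Finset α, (if U ⊆ T then p ^ T.card * (1 - p) ^ (Tᶜ).card else 0) = p ^ U.card := by
  have h := Finset.prod_add (fun _ : α => p) (fun i => if i ∈ U then 0 else 1 - p) Finset.univ
  have hl : ∏ i : α, (p + if i ∈ U then 0 else 1 - p) = p ^ U.card := by
    have : ∀ i : α, (p + if i ∈ U then 0 else 1 - p) = if i ∈ U then p else 1 := by
      intro i; split_ifs <;> ring
    simp only [this]
    rw [Finset.prod_ite]
    simp
  rw [← hl, h, Finset.powerset_univ]
  apply Finset.sum_congr rfl
  intro T _
  rw [Finset.prod_const, ← Finset.compl_eq_univ_sdiff]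
  split_ifs with hU
  · congr 1
    rw [← Finset.prod_const]
    apply Finset.prod_congr rfl
    intro i hi
    rw [if_neg]
    intro hiU
    exact (Finset.mem_compl.1 hi) (hU hiU)
  · obtain ⟨i, hi, hiT⟩ := Finset.not_subset.1 hU
    rw [Finset.prod_eq_zero (Finset.mem_compl.2 hiT), mul_zero]
    simp [hi]

theorem bw_sum {α : Type*} [Fintype α] [DecidableEq α] (U : Finset α) :
    ∑ T : Finset α, (if U ⊆ T then bw T else 0) = 1 / ((U.card : ℝ) + 1) := by
  have h1 : ∫ p in (0:ℝ)..1, p ^ U.card = 1 / ((U.card : ℝ) + 1) := by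
    rw [integral_pow]; simp
  rw [← h1]
  simp_rw [← bw_point U]
  rw [intervalIntegral.integral_finsetSum]
  · apply Finset.sum_congr rfl
    intro T _
    split_ifs
    · rfl
    · simp
  · intro T _
    apply Continuous.intervalIntegrable
    split_ifs <;> fun_prop

theorem alt_sum {β : Type*} [DecidableEq β] (F : Finset β) :
    ∑ X ∈ F.powerset.filter (fun X => X.Nonempty), (-1 : ℝ) ^ (X.card + 1)
      = if F.Nonempty then 1 else 0 := by
  have h : ∑ X ∈ F.powerset, (-1 : ℝ) ^ X.card = if F = ∅ then 1 else 0 := by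
    exact_mod_cast congrArg (Int.cast : ℤ → ℝ) (Finset.sum_powerset_neg_one_pow_card (x := F))
  have h2 : F.powerset.filter (fun X => X.Nonempty) = F.powerset.erase ∅ := by
    ext X; simp [Finset.nonempty_iff_ne_empty, and_comm]
  have h3 := Finset.add_sum_erase F.powerset (fun X => (-1 : ℝ) ^ X.card)
    (Finset.empty_mem_powerset F)
  rw [h2]
  simp only [pow_succ, mul_neg, mul_one, Finset.sum_neg_distrib]
  rw [h] at h3
  by_cases hF : F = ∅
  · simp [hF] at h3 ⊢
  · simp only [hF, Finset.nonempty_iff_ne_empty, if_false, Finset.card_empty, pow_zero, ne_eq,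
      not_false_eq_true, if_true] at h3 ⊢
    linarith

theorem Sn_eq (n : ℕ) :
    Sn n = ∑ T : Finset (Fin n × Fin n),
      if ((bingoLines n).filter (fun L => L ⊆ T)).Nonempty then bw T else 0 := by
  unfold Sn
  have : ∀ X : Finset (Finset (Fin n × Fin n)),
      (-1 : ℝ) ^ (X.card + 1) / (((X.sup id).card : ℝ) + 1)
      = ∑ T : Finset (Fin n × Fin n),
        if X.sup id ⊆ T then (-1 : ℝ) ^ (X.card + 1) * bw T else 0 := by
    intro X
    rw [div_eq_mul_one_div, ← bw_sum, Finset.mul_sum]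
    simp
  simp_rw [this]
  rw [Finset.sum_comm]
  apply Finset.sum_congr rfl
  intro T _
  have h := congrArg (· * bw T) (alt_sum ((bingoLines n).filter (fun L => L ⊆ T)))
  simp only [ite_mul, one_mul, zero_mul] at h
  rw [← h, ← Finset.sum_filter, Finset.sum_mul]
  apply Finset.sum_congr _ (fun _ _ => rfl)
  ext X
  have hs : X.sup id ⊆ T ↔ ∀ L ∈ X, L ⊆ T := Finset.sup_le_iff
  simp only [Finset.mem_filter, Finset.mem_powerset, hs, Finset.subset_iff (s₂ := bingoLines n),
    Finset.subset_iff (s₁ := X)]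
  constructor
  · rintro ⟨⟨a, b⟩, c⟩
    exact ⟨fun L hL => ⟨a hL, c L hL⟩, b⟩
  · rintro ⟨a, b⟩
    exact ⟨⟨fun L hL => (a hL).1, b⟩, fun L hL => (a hL).2⟩

theorem line_nonempty (n : ℕ) (hn : 1 ≤ n) (L : Finset (Fin n × Fin n))
    (hL : L ∈ bingoLines n) : L.Nonempty := by
  simp only [bingoLines, Finset.mem_union, Finset.mem_image, Finset.mem_univ, true_and,
    Finset.mem_insert, Finset.mem_singleton] at hL
  rcases hL with (⟨i, rfl⟩ | ⟨j, rfl⟩) | rfl | rfl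
  · exact ⟨(i, i), by simp [bingoRow]⟩
  · exact ⟨(j, j), by simp [bingoCol]⟩
  · exact ⟨(⟨0, hn⟩, ⟨0, hn⟩), by simp [bingoDiag]⟩
  · exact ⟨(⟨0, hn⟩, ⟨n - 1, by omega⟩), by simp [bingoAntiDiag]⟩

/-- `0 < S_n < 1`, equivalently `0 < 1 - S_n < 1`. -/
theorem Sn_bounds (n : ℕ) (hn : 1 ≤ n) :
    (0 < Sn n ∧ Sn n < 1) ∧ (0 < 1 - Sn n ∧ 1 - Sn n < 1) := by
  have hpos : 0 < Sn n := by
    rw [Sn_eq]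
    apply Finset.sum_pos'
    · intro T _
      split_ifs
      · exact (bw_pos T).le
      · exact le_rfl
    · refine ⟨Finset.univ, Finset.mem_univ _, ?_⟩
      rw [if_pos]
      · exact bw_pos _
      · exact ⟨bingoDiag n, by simp [bingoLines]⟩
  have hlt : Sn n < 1 := by
    have h1 : ∑ T : Finset (Fin n × Fin n), bw T = 1 := by
      have := bw_sum (∅ : Finset (Fin n × Fin n))
      simpa using this
    rw [Sn_eq, ← h1]
    apply Finset.sum_lt_sum
    · intro T _
      split_ifs
      · exact le_rfl
      · exact (bw_pos T).le
    · refine ⟨∅, Finset.mem_univ _, ?_⟩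
      rw [if_neg]
      · exact bw_pos _
      · rintro ⟨L, hL⟩
        rw [Finset.mem_filter] at hL
        have := line_nonempty n hn L hL.1
        exact this.ne_empty (Finset.subset_empty.1 hL.2)
  exact ⟨⟨hpos, hlt⟩, by linarith, by linarith⟩
end

section
/- In the N-player (n,m)-Bingo game with fixed cards c_1,…,c_N, one has 1 − S_{n,N} = ∫₀¹ Q_N(p) dp, where Q_N(p) is the probability that no number-set A ∈ 𝓛_N is fully marked when each of the m·n numbers is independently marked with probability p; consequently 0 < 1 − S_{n,N} < 1 and E[B_N] = (m·n + 1)·∫₀¹ Q_N(p) dp. -/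
open Finset

/-- The set `𝓛_N` of distinct number-sets of winning lines across the `N` cards. -/
def bingoLinesN (n m N : ℕ) (c : Fin N → Fin n × Fin n → Fin (m * n)) :
    Finset (Finset (Fin (m * n))) :=
  ((Finset.univ : Finset (Fin N)) ×ˢ bingoLines n).image
    (fun q => q.2.image (c q.1))

/-- Some number-set in `𝓛_N` is contained among the first `k` calls of `σ`. -/
def BingoWinsN (n m N : ℕ) (c : Fin N → Fin n × Fin n → Fin (m * n))
    (σ : Equiv.Perm (Fin (m * n))) (k : ℕ) : Prop :=
  ∃ A ∈ bingoLinesN n m N c, ∀ x ∈ A, ∃ t : Fin (m * n), (t : ℕ) < k ∧ σ t = x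

/-- `S_{n,N}` for a fixed realization of the `N` cards. -/
noncomputable def SnN (n m N : ℕ) (c : Fin N → Fin n × Fin n → Fin (m * n)) : ℝ :=
  ∑ Y ∈ (bingoLinesN n m N c).powerset.filter (fun Y => Y.Nonempty),
    (-1 : ℝ) ^ (Y.card + 1) / (((Y.sup id).card : ℝ) + 1)

/-- `Q_N(p)`: the probability that no number-set in `𝓛_N` is fully marked, when each of
the `m·n` numbers is independently marked with probability `p`. -/
noncomputable def QmarkN (n m N : ℕ) (c : Fin N → Fin n × Fin n → Fin (m * n))
    (p : ℝ) : ℝ :=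
  ∑ f ∈ (Finset.univ : Finset (Fin (m * n) → Bool)).filter
      (fun f => ¬ ∃ A ∈ bingoLinesN n m N c, ∀ x ∈ A, f x = true),
    ∏ x : Fin (m * n), (if f x then p else 1 - p)

open Classical in
lemma bm_incl_excl {α : Type*} (F : Finset (Finset α)) (W : α → Prop) :
    (if (¬ ∃ A ∈ F, ∀ x ∈ A, W x) then (1:ℝ) else 0) =
      ∑ Y ∈ F.powerset, (-1 : ℝ) ^ Y.card * (if (∀ x ∈ Y.sup id, W x) then 1 else 0) := by
  have h1 : (if (¬ ∃ A ∈ F, ∀ x ∈ A, W x) then (1:ℝ) else 0) =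
      ∏ A ∈ F, ((-(if (∀ x ∈ A, W x) then (1:ℝ) else 0)) + 1) := by
    by_cases h : ¬ ∃ A ∈ F, ∀ x ∈ A, W x
    · rw [if_pos h]
      push Not at h
      symm
      apply Finset.prod_eq_one
      intro A hA
      obtain ⟨x, hx, hW⟩ := h A hA
      rw [if_neg (fun h' => hW (h' x hx))]; simp
    · rw [if_neg h]
      obtain ⟨A, hA, h⟩ := not_not.mp h
      symm
      apply Finset.prod_eq_zero hA
      rw [if_pos h]; simp
  rw [h1, Finset.prod_add_one]
  apply Finset.sum_congr rfl
  intro Y hY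
  rw [Finset.prod_neg, Finset.prod_boole]
  congr 1
  apply if_congr _ rfl rfl
  simp only [Finset.mem_sup, id]
  aesop

lemma bm_marg {M : ℕ} (U : Finset (Fin M)) (p : ℝ) :
    ∑ f : Fin M → Bool, (if (∀ x ∈ U, f x = true) then (1:ℝ) else 0) *
      ∏ x : Fin M, (if f x then p else 1 - p) = p ^ U.card := by
  have h : ∀ f : Fin M → Bool, (if (∀ x ∈ U, f x = true) then (1:ℝ) else 0) *
      ∏ x : Fin M, (if f x then p else 1 - p) =
      ∏ x : Fin M, (if f x then p else if x ∈ U then 0 else 1 - p) := by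
    intro f
    split_ifs with h
    · rw [one_mul]
      apply Finset.prod_congr rfl
      intro x _
      by_cases hx : x ∈ U
      · simp [h x hx]
      · simp [hx]
    · push Not at h
      obtain ⟨x, hx, hf⟩ := h
      rw [zero_mul]; symm
      apply Finset.prod_eq_zero (Finset.mem_univ x)
      simp [hx, hf]
  rw [Finset.sum_congr rfl (fun f _ => h f)]
  have := (Finset.prod_univ_sum (fun _ : Fin M => (Finset.univ : Finset Bool))
    (fun x b => (if b then p else if x ∈ U then (0:ℝ) else 1 - p))).symm
  rw [Fintype.piFinset_univ] at this
  rw [this]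
  have h2 : ∀ x : Fin M, ∑ b : Bool, (if b then p else if x ∈ U then (0:ℝ) else 1 - p) =
      if x ∈ U then p else 1 := by
    intro x
    rw [Fintype.sum_bool]
    split_ifs <;> simp_all
  rw [Finset.prod_congr rfl (fun x _ => h2 x), Finset.prod_ite_mem]
  simp

lemma bm_Q {M : ℕ} (F : Finset (Finset (Fin M))) (p : ℝ) :
    (∑ f ∈ (Finset.univ : Finset (Fin M → Bool)).filter
      (fun f => ¬ ∃ A ∈ F, ∀ x ∈ A, f x = true),
      ∏ x : Fin M, (if f x then p else 1 - p)) =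
    ∑ Y ∈ F.powerset, (-1 : ℝ) ^ Y.card * p ^ (Y.sup id).card := by
  rw [Finset.sum_filter]
  have h : ∀ f : Fin M → Bool, (if (¬ ∃ A ∈ F, ∀ x ∈ A, f x = true) then
      ∏ x : Fin M, (if f x then p else 1 - p) else 0) =
      ∑ Y ∈ F.powerset, (-1 : ℝ) ^ Y.card * ((if (∀ x ∈ Y.sup id, f x = true) then 1 else 0) *
        ∏ x : Fin M, (if f x then p else 1 - p)) := by
    intro f
    have := bm_incl_excl F (fun x => f x = true)
    simp only [← mul_assoc]
    rw [← Finset.sum_mul]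
    have e : ∀ a : ℝ, (if (¬ ∃ A ∈ F, ∀ x ∈ A, f x = true) then a else 0) =
        (if (¬ ∃ A ∈ F, ∀ x ∈ A, f x = true) then 1 else 0) * a := by
      intro a; split_ifs <;> simp
    rw [e]
    congr 1
    convert this
  rw [Finset.sum_congr rfl (fun f _ => h f), Finset.sum_comm]
  apply Finset.sum_congr rfl
  intro Y _
  rw [← Finset.mul_sum, bm_marg]

lemma bm_count {M : ℕ} (k : ℕ) (hk : k ≤ M) (U : Finset (Fin M)) :
    ((Finset.univ : Finset (Equiv.Perm (Fin M))).filter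
      (fun σ => ∀ x ∈ U, (σ x : ℕ) < k)).card * M.descFactorial U.card =
    M.factorial * k.descFactorial U.card := by
  induction U using Finset.induction_on with
  | empty => simp [Fintype.card_perm]
  | insert a U ha ih =>
    rw [Finset.card_insert_of_notMem ha, Nat.descFactorial_succ, Nat.descFactorial_succ]
    set N := fun V : Finset (Fin M) => ((Finset.univ : Finset (Equiv.Perm (Fin M))).filter
      (fun σ => ∀ x ∈ V, (σ x : ℕ) < k)) with hN
    change (N (insert a U)).card * _ = _
    change (N U).card * _ = _ at ih
    have hs : ∀ y ∈ Uᶜ, (N (insert y U)).card = (N (insert a U)).card := by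
      intro y hy
      rw [Finset.mem_compl] at hy
      apply Finset.card_bij (fun σ _ => σ * Equiv.swap a y)
      · intro σ hσ
        simp only [hN, Finset.mem_filter, Finset.mem_univ, true_and, Finset.mem_insert,
          forall_eq_or_imp, Equiv.Perm.mul_apply, Equiv.swap_apply_left] at hσ ⊢
        refine ⟨hσ.1, fun x hx => ?_⟩
        rw [Equiv.swap_apply_of_ne_of_ne (by rintro rfl; exact ha hx) (by rintro rfl; exact hy hx)]
        exact hσ.2 x hx
      · intro σ _ τ _ h
        exact mul_right_cancel h
      · intro σ hσ
        refine ⟨σ * Equiv.swap a y, ?_, by simp [mul_assoc]⟩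
        simp only [hN, Finset.mem_filter, Finset.mem_univ, true_and, Finset.mem_insert,
          forall_eq_or_imp, Equiv.Perm.mul_apply, Equiv.swap_apply_right] at hσ ⊢
        refine ⟨hσ.1, fun x hx => ?_⟩
        rw [Equiv.swap_apply_of_ne_of_ne (by rintro rfl; exact ha hx) (by rintro rfl; exact hy hx)]
        exact hσ.2 x hx
    have h1 : ∑ y ∈ Uᶜ, (N (insert y U)).card = (M - U.card) * (N (insert a U)).card := by
      rw [Finset.sum_congr rfl hs, Finset.sum_const, Finset.card_compl, Fintype.card_fin, smul_eq_mul]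
    have h2 : ∑ y ∈ Uᶜ, (N (insert y U)).card = (N U).card * (k - U.card) := by
      have e : ∀ y, (N (insert y U)).card = ∑ σ ∈ N U, if (σ y : ℕ) < k then 1 else 0 := by
        intro y
        rw [← Finset.card_filter]
        congr 1
        ext σ
        simp [hN, and_comm]
      simp only [e]
      rw [Finset.sum_comm, Finset.card_eq_sum_ones, Finset.sum_mul]
      apply Finset.sum_congr rfl
      intro σ hσ
      simp only [hN, Finset.mem_filter, Finset.mem_univ, true_and] at hσ
      rw [← Finset.card_filter, one_mul]
      have e1 : Finset.filter (fun y => (σ y : ℕ) < k) Uᶜ =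
          (Finset.univ.filter (fun y => (σ y : ℕ) < k)) \ U := by
        ext y; simp [and_comm]
      rw [e1, Finset.card_sdiff_of_subset (by intro x hx; simp [hσ x hx])]
      congr 1
      have e2 : (Finset.univ.filter (fun y => (σ y : ℕ) < k)).card =
          (Finset.univ.filter (fun y : Fin M => (y : ℕ) < k)).card := by
        apply Finset.card_equiv σ
        intro i; simp
      rw [e2, Fin.card_filter_val_lt]
      omega
    calc (N (insert a U)).card * ((M - U.card) * M.descFactorial U.card)
        = ((M - U.card) * (N (insert a U)).card) * M.descFactorial U.card := by ring
      _ = ((N U).card * M.descFactorial U.card) * (k - U.card) := by rw [← h1, h2]; ring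
      _ = _ := by rw [ih]; ring

lemma bm_sum {M : ℕ} (U : Finset (Fin M)) :
    ∑ k ∈ Finset.range (M + 1), (((Finset.univ : Finset (Equiv.Perm (Fin M))).filter
      (fun σ => ∀ x ∈ U, (σ x : ℕ) < k)).card : ℝ) =
    M.factorial * ((M + 1) / (U.card + 1)) := by
  have hU : U.card ≤ M := by simpa using Finset.card_le_univ U
  have hd : (0:ℝ) < M.choose U.card := by exact_mod_cast Nat.choose_pos hU
  have h : ∀ k ∈ Finset.range (M+1), (((Finset.univ : Finset (Equiv.Perm (Fin M))).filter
      (fun σ => ∀ x ∈ U, (σ x : ℕ) < k)).card : ℝ) =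
      M.factorial / M.choose U.card * (k.choose U.card : ℕ) := by
    intro k hk
    have := bm_count k (by simpa [Nat.lt_succ_iff] using hk) U
    rw [Nat.descFactorial_eq_factorial_mul_choose, Nat.descFactorial_eq_factorial_mul_choose] at this
    have h2 : ((Finset.univ : Finset (Equiv.Perm (Fin M))).filter
      (fun σ => ∀ x ∈ U, (σ x : ℕ) < k)).card * M.choose U.card = M.factorial * k.choose U.card :=
      Nat.eq_of_mul_eq_mul_left (Nat.factorial_pos U.card) (by linarith)
    rw [div_mul_eq_mul_div, eq_div_iff hd.ne']
    exact_mod_cast h2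
  rw [Finset.sum_congr rfl h, ← Finset.mul_sum, ← Nat.cast_sum]
  have h3 : ∀ M u : ℕ, ∑ k ∈ Finset.range (M+1), k.choose u = (M+1).choose (u+1) := by
    intro M u
    induction M with
    | zero => cases u <;> simp [Nat.choose_succ_succ]
    | succ M ih => rw [Finset.sum_range_succ, ih, Nat.choose_succ_succ (M+1) u, add_comm]
  rw [h3]
  have h4 : ((M:ℝ)+1) * M.choose U.card = (M+1).choose (U.card+1) * (U.card+1) := by
    exact_mod_cast Nat.add_one_mul_choose_eq M U.card
  field_simp
  linarith

lemma bm_pos {M : ℕ} (F : Finset (Finset (Fin M))) (hF : F.Nonempty) (hA : ∀ A ∈ F, A.Nonempty)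
    (p : ℝ) (hp : p ∈ Set.Icc (0:ℝ) 1) :
    (1 - p) ^ M ≤ (∑ f ∈ (Finset.univ : Finset (Fin M → Bool)).filter
      (fun f => ¬ ∃ A ∈ F, ∀ x ∈ A, f x = true),
      ∏ x : Fin M, (if f x then p else 1 - p)) ∧ 
    (∑ f ∈ (Finset.univ : Finset (Fin M → Bool)).filter
      (fun f => ¬ ∃ A ∈ F, ∀ x ∈ A, f x = true),
      ∏ x : Fin M, (if f x then p else 1 - p)) ≤ 1 - p ^ M := by
  have hnn : ∀ f : Fin M → Bool, 0 ≤ ∏ x : Fin M, (if f x then p else 1 - p) := by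
    intro f
    apply Finset.prod_nonneg
    intro x _
    split_ifs
    · exact hp.1
    · linarith [hp.2]
  constructor
  · have := Finset.single_le_sum (s := (Finset.univ : Finset (Fin M → Bool)).filter
      (fun f => ¬ ∃ A ∈ F, ∀ x ∈ A, f x = true))
      (f := fun f => ∏ x : Fin M, (if f x then p else 1 - p)) (fun f _ => hnn f)
      (a := fun _ => false) (by
        simp only [Finset.mem_filter, Finset.mem_univ, true_and]
        rintro ⟨A, h, h'⟩
        obtain ⟨x, hx⟩ := hA A h
        simpa using h' x hx)
    simpa using this
  · have h1 := bm_marg (∅ : Finset (Fin M)) p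
    simp only [Finset.notMem_empty, false_imp_iff, implies_true, if_true, one_mul,
      Finset.card_empty, pow_zero] at h1
    have h2 : (∑ f ∈ (Finset.univ : Finset (Fin M → Bool)).filter
      (fun f => ¬ ∃ A ∈ F, ∀ x ∈ A, f x = true),
      ∏ x : Fin M, (if f x then p else 1 - p)) ≤ 
      ∑ f ∈ (Finset.univ : Finset (Fin M → Bool)).erase (fun _ => true),
      ∏ x : Fin M, (if f x then p else 1 - p) := by
      apply Finset.sum_le_sum_of_subset_of_nonneg
      · intro f hf
        simp only [Finset.mem_filter, Finset.mem_univ, true_and] at hf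
        simp only [Finset.mem_erase, Finset.mem_univ, and_true]
        rintro rfl
        obtain ⟨A, h⟩ := hF
        exact hf ⟨A, h, fun _ _ => rfl⟩
      · intro f _ _; exact hnn f
    have h3 := Finset.sum_erase_add (Finset.univ : Finset (Fin M → Bool))
      (fun f => ∏ x : Fin M, (if f x then p else 1 - p)) (Finset.mem_univ (fun _ => true))
    simp only [if_true, Finset.prod_const, Finset.card_univ, Fintype.card_fin] at h3
    linarith

lemma bm_B {M : ℕ} (F : Finset (Finset (Fin M))) (hF : F.Nonempty) (hA : ∀ A ∈ F, A.Nonempty)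
    (hM : 1 ≤ M) (σ : Equiv.Perm (Fin M)) (b : ℕ)
    (hb : IsLeast {k : ℕ | 1 ≤ k ∧ ∃ A ∈ F, ∀ x ∈ A, ∃ t : Fin M, (t : ℕ) < k ∧ σ t = x} b) :
    (b : ℝ) = ∑ k ∈ Finset.range (M+1), ∑ Y ∈ F.powerset, (-1 : ℝ) ^ Y.card *
      (if (∀ x ∈ Y.sup id, (σ.symm x : ℕ) < k) then 1 else 0) := by
  have ht : ∀ (x : Fin M) (k : ℕ), (∃ t : Fin M, (t : ℕ) < k ∧ σ t = x) ↔ (σ.symm x : ℕ) < k := by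
    intro x k
    constructor
    · rintro ⟨t, h, rfl⟩; simpa using h
    · intro h; exact ⟨σ.symm x, h, by simp⟩
  simp only [ht] at hb
  have hbM : b ≤ M := by
    apply hb.2
    obtain ⟨A, h⟩ := hF
    exact ⟨hM, A, h, fun x _ => (σ.symm x).2⟩
  have key : ∀ k ∈ Finset.range (M+1), ∑ Y ∈ F.powerset, (-1 : ℝ) ^ Y.card *
      (if (∀ x ∈ Y.sup id, (σ.symm x : ℕ) < k) then (1:ℝ) else 0) = if k < b then 1 else 0 := by
    intro k _
    have := bm_incl_excl F (fun x => (σ.symm x : ℕ) < k)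
    have e : (¬ ∃ A ∈ F, ∀ x ∈ A, (σ.symm x : ℕ) < k) ↔ k < b := by
      constructor
      · intro h
        by_contra hk
        push Not at hk
        obtain ⟨A, h1, h2⟩ := hb.1.2
        exact h ⟨A, h1, fun x hx => lt_of_lt_of_le (h2 x hx) hk⟩
      · rintro h ⟨A, h1, h2⟩
        have hk : 1 ≤ k := by
          obtain ⟨x, hx⟩ := hA A h1
          have := h2 x hx
          omega
        have := hb.2 ⟨hk, A, h1, h2⟩
        omega
    simp only [e] at this
    convert this.symm
  rw [Finset.sum_congr rfl key, ← Finset.sum_filter]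
  have : (Finset.range (M+1)).filter (fun k => k < b) = Finset.range b := by
    ext k; simp; omega
  rw [this]; simp

lemma bm_main {M : ℕ} (F : Finset (Finset (Fin M))) (hF : F.Nonempty) (hA : ∀ A ∈ F, A.Nonempty)
    (hM : 1 ≤ M) (B : Equiv.Perm (Fin M) → ℕ)
    (hB : ∀ σ, IsLeast {k : ℕ | 1 ≤ k ∧ ∃ A ∈ F, ∀ x ∈ A, ∃ t : Fin M, (t : ℕ) < k ∧ σ t = x}
      (B σ)) :
    ∑ σ, (B σ : ℝ) = M.factorial * ((M + 1) *
      ∑ Y ∈ F.powerset, (-1 : ℝ) ^ Y.card / ((Y.sup id).card + 1)) := by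
  rw [Finset.sum_congr rfl (fun σ _ => bm_B F hF hA hM σ (B σ) (hB σ))]
  rw [Finset.sum_comm]
  have h : ∀ k ∈ Finset.range (M+1), ∑ σ : Equiv.Perm (Fin M), ∑ Y ∈ F.powerset, (-1 : ℝ) ^ Y.card *
      (if (∀ x ∈ Y.sup id, (σ.symm x : ℕ) < k) then (1:ℝ) else 0) =
      ∑ Y ∈ F.powerset, (-1 : ℝ) ^ Y.card * (((Finset.univ : Finset (Equiv.Perm (Fin M))).filter
      (fun σ => ∀ x ∈ Y.sup id, (σ x : ℕ) < k)).card : ℝ) := by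
    intro k _
    rw [Finset.sum_comm]
    apply Finset.sum_congr rfl
    intro Y _
    rw [← Finset.mul_sum]
    congr 1
    have := Equiv.sum_comp (Equiv.inv (Equiv.Perm (Fin M)))
      (fun σ => (if (∀ x ∈ Y.sup id, (σ x : ℕ) < k) then (1:ℝ) else 0))
    rw [← Finset.sum_boole]
    exact this
  rw [Finset.sum_congr rfl h, Finset.sum_comm, Finset.mul_sum, Finset.mul_sum]
  apply Finset.sum_congr rfl
  intro Y _
  rw [← Finset.mul_sum, bm_sum]
  ring

lemma bm_sum_split {α : Type*} [DecidableEq α] (F : Finset (Finset α)) :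
    1 - ∑ Y ∈ F.powerset.filter (fun Y => Y.Nonempty),
      (-1 : ℝ) ^ (Y.card + 1) / (((Y.sup id).card : ℝ) + 1) =
    ∑ Y ∈ F.powerset, (-1 : ℝ) ^ Y.card / ((Y.sup id).card + 1) := by
  have h : F.powerset.filter (fun Y => Y.Nonempty) = F.powerset.erase ∅ := by
    ext Y; simp [Finset.nonempty_iff_ne_empty, and_comm]
  rw [h, ← Finset.sum_erase_add _ _ (Finset.empty_mem_powerset F), sub_eq_iff_eq_add]
  have : ∀ Y : Finset (Finset α), (-1 : ℝ) ^ (Y.card + 1) / (((Y.sup id).card : ℝ) + 1) =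
    - ((-1 : ℝ) ^ Y.card / ((Y.sup id).card + 1)) := by intro Y; rw [pow_succ]; ring
  simp only [this, Finset.sum_neg_distrib]
  simp

lemma bm_lines_nonempty (n : ℕ) (hn : 1 ≤ n) : ∀ L ∈ bingoLines n, L.Nonempty := by
  intro L hL
  simp only [bingoLines, Finset.mem_union, Finset.mem_image, Finset.mem_univ, true_and,
    Finset.mem_insert, Finset.mem_singleton] at hL
  rcases hL with (⟨i, rfl⟩ | ⟨i, rfl⟩) | rfl | rfl
  · exact ⟨(i, i), by simp [bingoRow]⟩
  · exact ⟨(i, i), by simp [bingoCol]⟩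
  · exact ⟨(⟨0, hn⟩, ⟨0, hn⟩), by simp [bingoDiag]⟩
  · exact ⟨(⟨0, hn⟩, ⟨n - 1, by omega⟩), by simp [bingoAntiDiag]⟩

/-- `1 - S_{n,N} = ∫₀¹ Q_N(p) dp`, consequently `0 < 1 - S_{n,N} < 1` and
`E[B_N] = (m·n + 1)·∫₀¹ Q_N(p) dp`. -/
theorem bingo_multiplayer_integral (n m N : ℕ) (hn : 1 ≤ n) (hm : n ≤ m) (hN : 1 ≤ N)
    (c : Fin N → Fin n × Fin n → Fin (m * n)) (hc : ∀ a, IsBingoCard n m (c a))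
    (B : Equiv.Perm (Fin (m * n)) → ℕ)
    (hB : ∀ σ, IsLeast {k : ℕ | 1 ≤ k ∧ BingoWinsN n m N c σ k} (B σ)) :
    (1 - SnN n m N c = ∫ p in (0:ℝ)..1, QmarkN n m N c p) ∧
    (0 < 1 - SnN n m N c) ∧ (1 - SnN n m N c < 1) ∧
    ((∑ σ : Equiv.Perm (Fin (m * n)), (B σ : ℝ)) / (Nat.factorial (m * n)) =
      ((m * n : ℕ) + 1) * ∫ p in (0:ℝ)..1, QmarkN n m N c p) := by
  have hA : ∀ A ∈ bingoLinesN n m N c, A.Nonempty := by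
    intro A hA
    simp only [bingoLinesN, Finset.mem_image, Finset.mem_product] at hA
    obtain ⟨q, hq, rfl⟩ := hA
    exact (bm_lines_nonempty n hn _ hq.2).image _
  have hF : (bingoLinesN n m N c).Nonempty := by
    apply Finset.Nonempty.image
    exact ⟨(⟨0, hN⟩, bingoDiag n), by simp [bingoLines]⟩
  have hM : 1 ≤ m * n := Nat.mul_pos (by omega) (by omega)
  have hQ : ∀ p, QmarkN n m N c p = ∑ Y ∈ (bingoLinesN n m N c).powerset,
      (-1 : ℝ) ^ Y.card * p ^ (Y.sup id).card := fun p => bm_Q _ p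
  have hcont : Continuous (QmarkN n m N c) := by
    rw [funext hQ]; fun_prop
  have hpos := bm_pos (bingoLinesN n m N c) hF hA
  have hmain := bm_main (bingoLinesN n m N c) hF hA hM B hB
  have hint : ∫ p in (0:ℝ)..1, QmarkN n m N c p = ∑ Y ∈ (bingoLinesN n m N c).powerset,
      (-1 : ℝ) ^ Y.card / ((Y.sup id).card + 1) := by
    simp only [hQ]
    rw [intervalIntegral.integral_finset_sum
      (fun i _ => Continuous.intervalIntegrable (by fun_prop) _ _)]
    apply Finset.sum_congr rfl
    intro Y _
    rw [intervalIntegral.integral_const_mul, integral_pow]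
    simp [div_eq_mul_inv]
  have h1 : 1 - SnN n m N c = ∫ p in (0:ℝ)..1, QmarkN n m N c p := by
    rw [hint]; exact bm_sum_split _
  have hM0 : (0:ℝ) < ((m * n : ℕ) : ℝ) + 1 := by positivity
  refine ⟨h1, ?_, ?_, ?_⟩
  · rw [h1]
    have h2 : ∫ p in (0:ℝ)..1, (1 - p) ^ (m * n) ≤ ∫ p in (0:ℝ)..1, QmarkN n m N c p :=
      intervalIntegral.integral_mono_on zero_le_one
        (Continuous.intervalIntegrable (by fun_prop) _ _) (hcont.intervalIntegrable _ _)
        (fun p hp => (hpos p hp).1)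
    rw [intervalIntegral.integral_comp_sub_left (fun x : ℝ => x ^ (m * n)) 1, integral_pow] at h2
    refine lt_of_lt_of_le ?_ h2
    simp only [sub_self, sub_zero, one_pow]
    rw [zero_pow (by omega)]
    positivity
  · rw [h1]
    have h2 : ∫ p in (0:ℝ)..1, QmarkN n m N c p ≤ ∫ p in (0:ℝ)..1, (1 - p ^ (m * n)) :=
      intervalIntegral.integral_mono_on zero_le_one
        (hcont.intervalIntegrable _ _) (Continuous.intervalIntegrable (by fun_prop) _ _)
        (fun p hp => (hpos p hp).2)
    rw [intervalIntegral.integral_sub (by simp) (Continuous.intervalIntegrable (by fun_prop) _ _),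
      integral_pow] at h2
    refine lt_of_le_of_lt h2 ?_
    simp only [one_pow, intervalIntegral.integral_const, sub_zero, smul_eq_mul, mul_one]
    rw [zero_pow (by omega), sub_zero]
    have : (0:ℝ) < 1 / (((m * n : ℕ) : ℝ) + 1) := by positivity
    linarith
  · rw [hint, hmain, mul_div_cancel_left₀]
    exact_mod_cast (Nat.factorial_pos _).ne'
end
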